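/- arXiv:1406.1739 — 8 statements merged into one kernel-verified Lean document; each statement's English description precedes it below -/
import Mathlib

section
/- Let n ≥ 1 and c > 1. Let G be a real symmetric positive definite n×n matrix with |G_{ij}| < c for all i, j and det G > 1/c. Then there exists an invertible real n×n matrix F with G = Fᵀ·F such that |F_{ij}| < n·√c and |(F⁻¹)_{ij}| < n·√((n−1)!·cⁿ) for all i, j. -/
open Matrix

/-!
Any square factor `F` with `G = Fᵀ F` works. The diagonal of `Fᵀ F = G` gives `F i j ^ 2 ≤ G j j < c`.
The diagonal of `F⁻¹ (F⁻¹)ᵀ = G⁻¹` gives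
`F⁻¹ i j ^ 2 ≤ G⁻¹ i i = (adjugate G) i i / det G`, where the cofactor is at most
`(n - 1)! c ^ (n - 1)` by the Leibniz expansion and `1 / det G < c`.
-/

/-- The diagonal entries of `Fᵀ F` are the squared norms of the columns of `F`. -/
lemma sq_le_transpose_mul_self {n : ℕ} (F : Matrix (Fin n) (Fin n) ℝ) (i j : Fin n) :
    F i j ^ 2 ≤ (Fᵀ * F) j j := by
  rw [Matrix.mul_apply, sq]
  exact Finset.single_le_sum (f := fun k => Fᵀ j k * F k j)
    (fun k _ => mul_self_nonneg (F k j)) (Finset.mem_univ i)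

/-- A diagonal cofactor is a principal minor of size `n - 1`, with `(n - 1)!` Leibniz terms. -/
lemma adjugate_diag_le {n : ℕ} (hn : 1 ≤ n) {c : ℝ} (G : Matrix (Fin n) (Fin n) ℝ)
    (hentry : ∀ i j, |G i j| < c) (i : Fin n) :
    G.adjugate i i ≤ (n - 1).factorial * c ^ (n - 1) := by
  obtain ⟨m, rfl⟩ := Nat.exists_eq_add_of_le' hn
  rw [Matrix.adjugate_fin_succ_eq_det_submatrix]
  have h := Matrix.det_le (A := G.submatrix i.succAbove i.succAbove)
    (abv := (IsAbsoluteValue.toAbsoluteValue abs : AbsoluteValue ℝ ℝ)) (x := c)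
    (fun a b => (hentry _ _).le)
  have h' : |(G.submatrix i.succAbove i.succAbove).det| ≤ m.factorial * c ^ m := by
    simpa using h
  rw [Even.neg_one_pow ⟨(i : ℕ), rfl⟩, one_mul]
  simpa using (le_abs_self _).trans h'

lemma abs_lt_nat_mul_sqrt {n : ℕ} (hn : 1 ≤ n) {x a : ℝ} (h : x ^ 2 < a) :
    |x| < n * Real.sqrt a := by
  have h1 : |x| < Real.sqrt a := Real.lt_sqrt_of_sq_lt (by rwa [sq_abs])
  have h2 : (1 : ℝ) ≤ n := by exact_mod_cast hn
  nlinarith [Real.sqrt_nonneg a]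

theorem stmt_0 (n : ℕ) (hn : 1 ≤ n) (c : ℝ) (hc : 1 < c)
    (G : Matrix (Fin n) (Fin n) ℝ) (hG : G.PosDef)
    (hentry : ∀ i j, |G i j| < c) (hdet : 1 / c < G.det) :
    ∃ F : Matrix (Fin n) (Fin n) ℝ, IsUnit F.det ∧ G = Fᵀ * F ∧
      (∀ i j, |F i j| < n * Real.sqrt c) ∧
      (∀ i j, |F⁻¹ i j| < n * Real.sqrt ((n - 1).factorial * c ^ n)) := by
  have hc0 : 0 < c := by linarith
  have hd : 0 < G.det := lt_trans (by positivity) hdet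
  obtain ⟨F, hF⟩ : ∃ F : Matrix (Fin n) (Fin n) ℝ, G = Fᵀ * F := by
    open scoped MatrixOrder in
    obtain ⟨F, hF⟩ := CStarAlgebra.nonneg_iff_eq_star_mul_self.mp hG.posSemidef.nonneg
    exact ⟨F, by rw [hF, star_eq_conjTranspose, conjTranspose_eq_transpose_of_trivial]⟩
  refine ⟨F, ?_, hF, fun i j => abs_lt_nat_mul_sqrt hn ?_, fun i j => abs_lt_nat_mul_sqrt hn ?_⟩
  · rw [isUnit_iff_ne_zero]
    intro h
    rw [hF, det_mul, h, mul_zero] at hd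
    exact hd.false
  · have h := sq_le_transpose_mul_self F i j
    rw [← hF] at h
    exact h.trans_lt ((le_abs_self _).trans_lt (hentry j j))
  · have h : F⁻¹ i j ^ 2 ≤ G⁻¹ i i := by
      have h := sq_le_transpose_mul_self (F⁻¹)ᵀ j i
      rwa [transpose_transpose, transpose_nonsing_inv, ← Matrix.mul_inv_rev, ← hF, ← transpose_nonsing_inv,
        transpose_apply] at h
    have hinv : G⁻¹ i i = G.adjugate i i / G.det := by
      rw [Matrix.inv_def, Matrix.smul_apply, Ring.inverse_eq_inv', smul_eq_mul, div_eq_inv_mul]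
    refine h.trans_lt ?_
    rw [hinv, div_lt_iff₀ hd]
    have hcd : 1 < c * G.det := by
      rwa [div_lt_iff₀ hc0, mul_comm] at hdet
    have hpos : (0 : ℝ) < (n - 1).factorial * c ^ (n - 1) := by positivity
    calc G.adjugate i i ≤ (n - 1).factorial * c ^ (n - 1) := adjugate_diag_le hn G hentry i
      _ < (n - 1).factorial * c ^ (n - 1) * (c * G.det) := lt_mul_of_one_lt_right hpos hcd
      _ = (n - 1).factorial * c ^ n * G.det := by
        rw [← pow_sub_one_mul (by omega : n ≠ 0) c]; ring
end

section
/- Let n ≥ 1 and c > 1. Let G be a real symmetric positive definite n×n matrix with |G_{ij}| < c for all i, j and det G > 1/c. Then every eigenvalue μ of G satisfies 1/(n!·cⁿ) < μ < n·c. -/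
open Matrix

/-!
If `A v = t v` with `v ≠ 0`, then reading this equation at a coordinate where `|v|` is maximal
bounds `|t|` by an absolute row sum of `A` (`abs_le_row_sum`). Applied to `G`, this gives `μ < n c`.
For the lower bound it is applied to the adjugate: `adj(G) G = det(G)` gives
`adj(G) v = (det G / μ) v`, and each entry of `adj(G)` is, up to sign, a minor of size `n - 1`,
hence at most `(n-1)! cⁿ⁻¹` in absolute value (`abs_adjugate_le`). Therefore
`1 / c < det G ≤ μ n! cⁿ⁻¹`.
-/

lemma abs_le_row_sum {n : ℕ} (A : Matrix (Fin n) (Fin n) ℝ) (t : ℝ) (v : Fin n → ℝ)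
    (hv : v ≠ 0) (h : A.mulVec v = t • v) : ∃ k, |t| ≤ ∑ j, |A k j| := by
  obtain ⟨i, hi⟩ := Function.ne_iff.mp hv
  obtain ⟨k, -, hk⟩ := Finset.exists_max_image Finset.univ (fun i => |v i|) ⟨i, Finset.mem_univ i⟩
  have hpos : 0 < |v k| := (abs_pos.mpr hi).trans_le (hk i (Finset.mem_univ i))
  refine ⟨k, le_of_mul_le_mul_right ?_ hpos⟩
  have hrow : ∑ j, A k j * v j = t * v k := congrFun h k
  calc |t| * |v k| = |∑ j, A k j * v j| := by rw [hrow, abs_mul]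
    _ ≤ ∑ j, |A k j * v j| := Finset.abs_sum_le_sum_abs _ _
    _ ≤ ∑ j, |A k j| * |v k| := Finset.sum_le_sum fun j _ => by
        rw [abs_mul]
        exact mul_le_mul_of_nonneg_left (hk j (Finset.mem_univ j)) (abs_nonneg _)
    _ = (∑ j, |A k j|) * |v k| := (Finset.sum_mul _ _ _).symm

lemma abs_adjugate_le {m : ℕ} (A : Matrix (Fin (m + 1)) (Fin (m + 1)) ℝ) (c : ℝ)
    (h : ∀ i j, |A i j| ≤ c) (i j : Fin (m + 1)) :
    |A.adjugate i j| ≤ m.factorial * c ^ m := by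
  rw [adjugate_fin_succ_eq_det_submatrix, abs_mul, abs_pow, abs_neg, abs_one, one_pow, one_mul]
  have := Matrix.det_le (A := A.submatrix j.succAbove i.succAbove)
    (abv := AbsoluteValue.abs) (x := c) (fun a b => h _ _)
  simpa using this

theorem stmt_1 (n : ℕ) (hn : 1 ≤ n) (c : ℝ) (hc : 1 < c)
    (G : Matrix (Fin n) (Fin n) ℝ) (hG : G.PosDef)
    (hentry : ∀ i j, |G i j| < c) (hdet : 1 / c < G.det)
    (μ : ℝ) (hμ : ∃ v : Fin n → ℝ, v ≠ 0 ∧ G.mulVec v = μ • v) :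
    1 / (n.factorial * c ^ n) < μ ∧ μ < n * c := by
  obtain ⟨m, rfl⟩ : ∃ m, n = m + 1 := ⟨n - 1, by omega⟩
  obtain ⟨v, hv, h⟩ := hμ
  have hc0 : 0 < c := by linarith
  have hμ0 : 0 < μ := by
    have h1 := hG.dotProduct_mulVec_pos hv
    rw [h, dotProduct_smul, smul_eq_mul] at h1
    exact pos_of_mul_pos_left h1 (dotProduct_star_self_nonneg v)
  constructor
  · have hadj : G.adjugate.mulVec v = (G.det / μ) • v := by
      have h1 : G.adjugate.mulVec (G.mulVec v) = G.det • v := by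
        rw [mulVec_mulVec, adjugate_mul, smul_mulVec, one_mulVec]
      rw [h, mulVec_smul] at h1
      rw [div_eq_inv_mul, mul_smul, ← h1, smul_smul, inv_mul_cancel₀ hμ0.ne', one_smul]
    obtain ⟨k, hk⟩ := abs_le_row_sum _ _ v hv hadj
    have hsum : ∑ j, |G.adjugate k j| ≤ ∑ _j : Fin (m + 1), (m.factorial * c ^ m : ℝ) :=
      Finset.sum_le_sum fun j _ => abs_adjugate_le G c (fun i j => (hentry i j).le) k j
    rw [Finset.sum_const, Finset.card_univ, Fintype.card_fin, nsmul_eq_mul] at hsum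
    have h2 := ((le_abs_self _).trans hk).trans hsum
    rw [div_le_iff₀ hμ0] at h2
    have h3 := hdet.trans_le h2
    rw [div_lt_iff₀ hc0] at h3
    rw [div_lt_iff₀ (by positivity), Nat.factorial_succ, pow_succ]
    push_cast at h3 ⊢
    linarith
  · obtain ⟨k, hk⟩ := abs_le_row_sum G μ v hv h
    calc μ ≤ ∑ j, |G k j| := (le_abs_self μ).trans hk
      _ < ∑ _j : Fin (m + 1), c :=
        Finset.sum_lt_sum_of_nonempty Finset.univ_nonempty fun j _ => hentry k j
      _ = ((m + 1 : ℕ) : ℝ) * c := by simp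
end

section
/- Let n ≥ 1 and c > 1. Let G be a real symmetric positive definite n×n matrix with |G_{ij}| < c for all i, j and det G > 1/c. Then for every nonzero u ∈ ℝⁿ one has (1/(n!·cⁿ))·‖u‖² < uᵀ·G·u < n·c·‖u‖², where ‖u‖ is the Euclidean norm. -/
/-!
The upper bound is the elementary estimate `u_i A_ij u_j ≤ M (u_i² + u_j²) / 2`, summed over all
`i, j`; it holds for every matrix whose entries are less than `M` in absolute value and is strict at
a diagonal index `i` with `u_i ≠ 0`.

For the lower bound the same estimate is applied to `G⁻¹ = (det G)⁻¹ adj G`. A cofactor of `G` is a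
determinant of size `n - 1`, hence at most `(n - 1)! c ^ (n - 1)`, and `(det G)⁻¹ < c`, so the entries
of `G⁻¹` are less than `(n - 1)! c ^ n` and `uᵀ G⁻¹ u < K ‖u‖²` with `K = n! c ^ n`. Evaluating the
form of `G` at `u - K⁻¹ G⁻¹ u` turns this into `K⁻¹ ‖u‖² < uᵀ G u`, without using eigenvalues.
-/

open Matrix

theorem quadForm_lt_of_entry_lt {n : ℕ} {M : ℝ} {A : Matrix (Fin n) (Fin n) ℝ}
    (hA : ∀ i j, |A i j| < M) {u : Fin n → ℝ} (hu : u ≠ 0) :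
    u ⬝ᵥ A.mulVec u < n * M * ∑ i, u i ^ 2 := by
  have key : ∀ i j, u i * (A i j * u j) ≤ M * ((u i ^ 2 + u j ^ 2) / 2) := by
    intro i j
    have h := abs_lt.1 (hA i j)
    nlinarith [mul_nonneg (sub_nonneg.2 h.2.le) (sq_nonneg (u i + u j)),
      mul_nonneg (neg_le_iff_add_nonneg.1 h.1.le) (sq_nonneg (u i - u j))]
  obtain ⟨k, hk⟩ := Function.ne_iff.1 hu
  have hk2 : 0 < u k ^ 2 := by have : u k ≠ 0 := hk; positivity
  have hstrict : u k * (A k k * u k) < M * ((u k ^ 2 + u k ^ 2) / 2) := by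
    nlinarith [(abs_lt.1 (hA k k)).2]
  calc u ⬝ᵥ A.mulVec u = ∑ i, ∑ j, u i * (A i j * u j) := by
        simp [dotProduct, mulVec, Finset.mul_sum]
    _ < ∑ i, ∑ j, M * ((u i ^ 2 + u j ^ 2) / 2) :=
        Finset.sum_lt_sum (fun i _ => Finset.sum_le_sum fun j _ => key i j)
          ⟨k, Finset.mem_univ k, Finset.sum_lt_sum (fun j _ => key k j)
            ⟨k, Finset.mem_univ k, hstrict⟩⟩
    _ = n * M * ∑ i, u i ^ 2 := by
        simp only [← Finset.mul_sum, ← Finset.sum_div, Finset.sum_add_distrib, Finset.sum_const,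
          Finset.card_univ, Fintype.card_fin, nsmul_eq_mul]
        ring

theorem abs_inv_entry_lt {m : ℕ} {c : ℝ} (hc : 1 < c)
    {G : Matrix (Fin (m + 1)) (Fin (m + 1)) ℝ}
    (hentry : ∀ i j, |G i j| < c) (hdet : 1 / c < G.det) (i j : Fin (m + 1)) :
    |G⁻¹ i j| < m.factorial * c ^ (m + 1) := by
  have hc0 : 0 < c := by linarith
  have hd : 0 < G.det := lt_trans (by positivity) hdet
  have hadj : |G.adjugate i j| ≤ m.factorial * c ^ m := by
    rw [adjugate_fin_succ_eq_det_submatrix, abs_mul, abs_pow, abs_neg, abs_one, one_pow, one_mul]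
    have := Matrix.det_le (A := G.submatrix j.succAbove i.succAbove)
      (abv := AbsoluteValue.abs) (x := c) (fun a b => (hentry _ _).le)
    simpa using this
  have hinv : (G.det)⁻¹ < c := by
    rw [inv_lt_comm₀ hd hc0]
    simpa using hdet
  rw [inv_def, Matrix.smul_apply, smul_eq_mul, Ring.inverse_eq_inv', abs_mul, abs_of_pos (inv_pos.2 hd)]
  calc (G.det)⁻¹ * |G.adjugate i j| ≤ (G.det)⁻¹ * (m.factorial * c ^ m) := by gcongr
    _ < c * (m.factorial * c ^ m) := by
        have : 0 < (m.factorial : ℝ) * c ^ m := by positivity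
        gcongr
    _ = m.factorial * c ^ (m + 1) := by ring

/-- For positive definite `G`, an upper bound for the form of `G⁻¹` at `u` gives a lower bound for
the form of `G` at `u`: expand the form of `G` at `u - K⁻¹ G⁻¹ u`, which is nonnegative. -/
theorem lt_quadForm_of_inv_quadForm_lt {n : ℕ} {K : ℝ} (hK : 0 < K)
    {G : Matrix (Fin n) (Fin n) ℝ} (hG : G.PosDef) {u : Fin n → ℝ}
    (h : u ⬝ᵥ G⁻¹.mulVec u < K * (u ⬝ᵥ u)) :
    1 / K * (u ⬝ᵥ u) < u ⬝ᵥ G.mulVec u := by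
  set w := G⁻¹.mulVec u with hw
  have hGw : G.mulVec w = u := by
    rw [hw, mulVec_mulVec, mul_nonsing_inv _ ((isUnit_iff_isUnit_det _).1 hG.isUnit), one_mulVec]
  have hsymm : Gᵀ = G := by simpa using hG.isHermitian.eq
  have hwGu : w ⬝ᵥ G.mulVec u = u ⬝ᵥ u := by
    rw [dotProduct_mulVec, ← mulVec_transpose, hsymm, hGw]
  have hnn : 0 ≤ (u - (1 / K) • w) ⬝ᵥ G.mulVec (u - (1 / K) • w) := by
    simpa using hG.posSemidef.dotProduct_mulVec_nonneg (u - (1 / K) • w)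
  rw [mulVec_sub, mulVec_smul, hGw, sub_dotProduct, dotProduct_sub, dotProduct_sub,
    smul_dotProduct, smul_dotProduct, dotProduct_smul, dotProduct_smul, hwGu,
    dotProduct_comm w u] at hnn
  simp only [smul_eq_mul] at hnn
  have h2 : 1 / K * (1 / K * (u ⬝ᵥ w)) < 1 / K * (u ⬝ᵥ u) := by
    have : 1 / K * (u ⬝ᵥ w) < u ⬝ᵥ u := by
      rw [one_div, inv_mul_lt_iff₀ hK]
      exact h
    have hK' : 0 < 1 / K := by positivity
    gcongr
  linarith

/-- Here `∑ i, u i ^ 2` is the square `‖u‖²` of the Euclidean norm of `u`. -/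
theorem stmt_2 (n : ℕ) (hn : 1 ≤ n) (c : ℝ) (hc : 1 < c)
    (G : Matrix (Fin n) (Fin n) ℝ) (hG : G.PosDef)
    (hentry : ∀ i j, |G i j| < c) (hdet : 1 / c < G.det)
    (u : Fin n → ℝ) (hu : u ≠ 0) :
    (1 / (n.factorial * c ^ n)) * (∑ i, u i ^ 2) < u ⬝ᵥ G.mulVec u ∧
      u ⬝ᵥ G.mulVec u < n * c * (∑ i, u i ^ 2) := by
  refine ⟨?_, quadForm_lt_of_entry_lt hentry hu⟩
  obtain ⟨m, rfl⟩ := Nat.exists_eq_add_of_le' hn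
  have hsq : ∑ i, u i ^ 2 = u ⬝ᵥ u := by simp [dotProduct, sq]
  have h := quadForm_lt_of_entry_lt (abs_inv_entry_lt hc hentry hdet) hu
  rw [hsq] at h ⊢
  refine lt_quadForm_of_inv_quadForm_lt (by positivity) hG (h.trans_eq ?_)
  rw [Nat.factorial_succ]
  push_cast
  ring
end

section
/- Let n ≥ 1, c > 1, ε > 0, and let I ⊆ ℝ be an open interval. Let G : I → (real symmetric positive definite n×n matrices) be twice differentiable with |G(t)_{ij}| < c for all t ∈ I and all i, j. Assume that for k = 1, 2, every t₀ ∈ I and every u ∈ ℝⁿ: |(d^k/dt^k)(uᵀ·G(t)·u) evaluated at t₀| ≤ ε·(uᵀ·G(t₀)·u). Then for k = 1, 2, all t ∈ I and all i, j: |(d^k/dt^k) G(t)_{ij}| ≤ 3·ε·c. -/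
open Matrix

/-!
Differentiation commutes with evaluating a quadratic form at a fixed vector, so the hypotheses say
that the matrices `G'` and `G''` of entrywise derivatives satisfy `|uᵀ G⁽ᵏ⁾ u| ≤ ε uᵀ G u`
(`hasDerivAt_quadForm`). These matrices are symmetric because `G` is symmetric on the open set `I`.
Polarization, `4 Aᵢⱼ = q_A(eᵢ + eⱼ) - q_A(eᵢ - eⱼ)`, and the parallelogram identity
`q_G(eᵢ + eⱼ) + q_G(eᵢ - eⱼ) = 2 Gᵢᵢ + 2 Gⱼⱼ` then bound each entry by `ε c`
(`abs_entry_le_of_quadForm_le`), which is stronger than the bound `3 ε c`.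
-/

/-- A quadratic form dominated by `ε` times another one has entries bounded through the diagonal of
the dominating form. -/
lemma abs_entry_le_of_quadForm_le {n : ℕ} {A M : Matrix (Fin n) (Fin n) ℝ} {c ε : ℝ} (hε : 0 < ε)
    (hA : ∀ i j, A i j = A j i) (hM : ∀ i j, |M i j| < c)
    (h : ∀ u : Fin n → ℝ, |u ⬝ᵥ A.mulVec u| ≤ ε * (u ⬝ᵥ M.mulVec u)) (i j : Fin n) :
    |A i j| ≤ ε * c := by
  have hp := h (Pi.single i 1 + Pi.single j 1)
  have hm := h (Pi.single i 1 - Pi.single j 1)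
  simp only [mulVec_add, mulVec_sub, add_dotProduct, sub_dotProduct, dotProduct_add,
    dotProduct_sub, single_dotProduct, mulVec_single_one, col_apply, one_mul] at hp hm
  have hi := mul_le_mul_of_nonneg_left (abs_lt.1 (hM i i)).2.le hε.le
  have hj := mul_le_mul_of_nonneg_left (abs_lt.1 (hM j j)).2.le hε.le
  rw [abs_le] at hp hm ⊢
  have hs := hA i j
  constructor <;> nlinarith

lemma hasDerivAt_quadForm {n : ℕ} {G : ℝ → Matrix (Fin n) (Fin n) ℝ} {t : ℝ}
    (h : ∀ i j, DifferentiableAt ℝ (fun s => G s i j) t) (u : Fin n → ℝ) :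
    HasDerivAt (fun s => u ⬝ᵥ (G s).mulVec u)
      (u ⬝ᵥ (Matrix.of fun i j => deriv (fun s => G s i j) t).mulVec u) t := by
  simp only [dotProduct, mulVec, of_apply]
  exact HasDerivAt.fun_sum fun i _ => HasDerivAt.const_mul _ <|
    HasDerivAt.fun_sum fun j _ => (h i j).hasDerivAt.mul_const _

theorem stmt_5 (n : ℕ) (hn : 1 ≤ n) (c ε : ℝ) (hc : 1 < c) (hε : 0 < ε)
    (I : Set ℝ) (hIopen : IsOpen I) (hIconn : I.OrdConnected)
    (G : ℝ → Matrix (Fin n) (Fin n) ℝ)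
    (hpos : ∀ t ∈ I, (G t).PosDef)
    (hdiff : ∀ i j, ∀ t ∈ I, DifferentiableAt ℝ (fun s => G s i j) t ∧
        DifferentiableAt ℝ (deriv fun s => G s i j) t)
    (hbound : ∀ t ∈ I, ∀ i j, |G t i j| < c)
    (hslow1 : ∀ t₀ ∈ I, ∀ u : Fin n → ℝ,
        |deriv (fun t => u ⬝ᵥ (G t).mulVec u) t₀| ≤ ε * (u ⬝ᵥ (G t₀).mulVec u))
    (hslow2 : ∀ t₀ ∈ I, ∀ u : Fin n → ℝ,
        |deriv (deriv fun t => u ⬝ᵥ (G t).mulVec u) t₀| ≤ ε * (u ⬝ᵥ (G t₀).mulVec u)) :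
    ∀ t ∈ I, ∀ i j,
      |deriv (fun s => G s i j) t| ≤ 3 * ε * c ∧
        |deriv (deriv fun s => G s i j) t| ≤ 3 * ε * c := by
  have hsymm : ∀ t ∈ I, ∀ i j, G t i j = G t j i := fun t ht i j => by
    simpa using (hpos t ht).isHermitian.apply j i
  have hsymm1 : ∀ t ∈ I, ∀ i j, deriv (fun s => G s i j) t = deriv (fun s => G s j i) t :=
    fun t ht i j => Filter.EventuallyEq.deriv_eq <| by
      filter_upwards [hIopen.mem_nhds ht] with s hs using hsymm s hs i j
  have hsymm2 : ∀ t ∈ I, ∀ i j,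
      deriv (deriv fun s => G s i j) t = deriv (deriv fun s => G s j i) t :=
    fun t ht i j => Filter.EventuallyEq.deriv_eq <| by
      filter_upwards [hIopen.mem_nhds ht] with s hs using hsymm1 s hs i j
  intro t ht i j
  have h1 : |deriv (fun s => G s i j) t| ≤ ε * c :=
    abs_entry_le_of_quadForm_le (A := Matrix.of fun i j => deriv (fun s => G s i j) t) hε
      (hsymm1 t ht) (hbound t ht)
      (fun u => by
        rw [← (hasDerivAt_quadForm (fun i j => (hdiff i j t ht).1) u).deriv]
        exact hslow1 t ht u) i j
  have h2 : |deriv (deriv fun s => G s i j) t| ≤ ε * c :=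
    abs_entry_le_of_quadForm_le (A := Matrix.of fun i j => deriv (deriv fun s => G s i j) t) hε
      (hsymm2 t ht) (hbound t ht)
      (fun u => by
        -- The formula for the first derivative holds on a neighbourhood of `t`, so it can be
        -- differentiated once more.
        have he : (deriv fun s => u ⬝ᵥ (G s).mulVec u) =ᶠ[nhds t]
            fun s => u ⬝ᵥ (Matrix.of fun i j => deriv (fun r => G r i j) s).mulVec u := by
          filter_upwards [hIopen.mem_nhds ht] with s hs
          exact (hasDerivAt_quadForm (fun i j => (hdiff i j s hs).1) u).deriv
        have hd := (hasDerivAt_quadForm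
          (G := fun s => Matrix.of fun i j => deriv (fun r => G r i j) s)
          (fun i j => (hdiff i j t ht).2) u).deriv
        have hq := hslow2 t ht u
        rw [he.deriv_eq, hd] at hq
        exact hq) i j
  have hεc : 0 < ε * c := by positivity
  constructor <;> linarith
end

section
/- Let n ≥ 1, c > 1, ε₁ ≥ 0, and let I ⊆ ℝ be an open interval. Let G : I → (real symmetric positive definite n×n matrices) be differentiable with |G(t)_{ij}| < c and det G(t) > 1/c for all t ∈ I, and |(d/dt) G(t)_{ij}| ≤ ε₁ for all t ∈ I and all i, j. Then for every t ∈ I and every u ∈ ℝⁿ: |(d/dt)(uᵀ·G(t)·u)| ≤ ε₁·n²·n!·cⁿ·(uᵀ·G(t)·u). -/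
/-! Two estimates are combined. Differentiating entrywise gives
`|d/dt (uᵀ G u)| ≤ ε₁ (∑ |uᵢ|)² ≤ ε₁ n ∑ uᵢ²`. Conversely, Cauchy-Schwarz for the form `G`, applied
to `u` and the `i`-th column of `adj G` (which `G` sends to `det G • eᵢ`), gives
`det G * uᵢ² ≤ (adj G)ᵢᵢ * uᵀ G u`. The cofactor `(adj G)ᵢᵢ` is a determinant of size `n - 1`
with entries bounded by `c`, hence at most `(n - 1)! c ^ (n - 1)`, and `1 / det G < c`, so that
`uᵢ² ≤ (n - 1)! c ^ n * uᵀ G u`. -/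

open Matrix

/-- Cauchy-Schwarz for the form `A`, applied to `u` and the `i`-th column of `adj A`. -/
theorem det_mul_sq_le_adjugate_mul {n : ℕ} {A : Matrix (Fin n) (Fin n) ℝ} (hA : A.PosDef)
    (u : Fin n → ℝ) (i : Fin n) :
    A.det * u i ^ 2 ≤ A.adjugate i i * (u ⬝ᵥ A.mulVec u) := by
  have hdet := hA.det_pos
  set v : Fin n → ℝ := A.adjugate.mulVec (Pi.single i 1) with hv
  have hAv : A.mulVec v = A.det • Pi.single i 1 := by
    rw [hv, mulVec_mulVec, mul_adjugate, smul_mulVec, one_mulVec]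
  have hsymm : Aᵀ = A := by
    have h := hA.isHermitian.eq
    rwa [conjTranspose_eq_transpose_of_trivial] at h
  have huv : u ⬝ᵥ A.mulVec v = A.det * u i := by
    rw [hAv, dotProduct_smul, dotProduct_single_one, smul_eq_mul]
  have hvu : v ⬝ᵥ A.mulVec u = A.det * u i := by
    rw [← huv, dotProduct_mulVec, ← mulVec_transpose, hsymm, dotProduct_comm]
  have hvv : v ⬝ᵥ A.mulVec v = A.det * A.adjugate i i := by
    rw [hAv, dotProduct_smul, dotProduct_single_one, smul_eq_mul, hv, mulVec_single_one, col_apply]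
  -- Nonnegativity of the form at `u - s v` is a quadratic inequality in `s`; its discriminant
  -- yields Cauchy-Schwarz.
  have hquad : ∀ s : ℝ, 0 ≤ (A.det * A.adjugate i i) * (s * s) + (-2 * (A.det * u i)) * s
      + u ⬝ᵥ A.mulVec u := by
    intro s
    have h := hA.posSemidef.dotProduct_mulVec_nonneg (u - s • v)
    simp only [star_trivial, mulVec_sub, mulVec_smul, sub_dotProduct, dotProduct_sub,
      smul_dotProduct, dotProduct_smul, huv, hvu, hvv, smul_eq_mul] at h
    linarith
  have hd := discrim_le_zero hquad
  rw [discrim] at hd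
  refine le_of_mul_le_mul_left ?_ hdet
  linarith

theorem adjugate_diag_le_s6 {m : ℕ} {A : Matrix (Fin (m + 1)) (Fin (m + 1)) ℝ} {c : ℝ}
    (h : ∀ i j, |A i j| ≤ c) (i : Fin (m + 1)) :
    A.adjugate i i ≤ m.factorial * c ^ m := by
  rw [adjugate_fin_succ_eq_det_submatrix, Even.neg_one_pow ⟨_, rfl⟩, one_mul]
  refine (le_abs_self _).trans ?_
  have := det_le (A := A.submatrix i.succAbove i.succAbove) (abv := AbsoluteValue.abs) (x := c)
    (fun a b => h _ _)
  simpa using this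

/-- The coordinate bound `uᵢ² ≤ (n - 1)! c ^ n * uᵀ A u`, with `n = m + 1`. -/
theorem sq_apply_le {m : ℕ} {A : Matrix (Fin (m + 1)) (Fin (m + 1)) ℝ} {c : ℝ} (hc : 1 < c)
    (hA : A.PosDef) (h : ∀ i j, |A i j| ≤ c) (hdet : 1 / c < A.det)
    (u : Fin (m + 1) → ℝ) (i : Fin (m + 1)) :
    u i ^ 2 ≤ m.factorial * c ^ (m + 1) * (u ⬝ᵥ A.mulVec u) := by
  have hc0 : 0 < c := by linarith
  have hq : 0 ≤ u ⬝ᵥ A.mulVec u := by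
    simpa using hA.posSemidef.dotProduct_mulVec_nonneg u
  have h3 : 1 / c * u i ^ 2 ≤ m.factorial * c ^ m * (u ⬝ᵥ A.mulVec u) :=
    calc 1 / c * u i ^ 2 ≤ A.det * u i ^ 2 := by gcongr
      _ ≤ A.adjugate i i * (u ⬝ᵥ A.mulVec u) := det_mul_sq_le_adjugate_mul hA u i
      _ ≤ _ := by gcongr; exact adjugate_diag_le_s6 h i
  calc u i ^ 2 = c * (1 / c * u i ^ 2) := by field_simp
    _ ≤ c * (m.factorial * c ^ m * (u ⬝ᵥ A.mulVec u)) := by gcongr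
    _ = _ := by ring

theorem abs_dotProduct_mulVec_le {n : ℕ} {B : Matrix (Fin n) (Fin n) ℝ} {ε : ℝ} (hε : 0 ≤ ε)
    (h : ∀ i j, |B i j| ≤ ε) (u : Fin n → ℝ) :
    |u ⬝ᵥ B.mulVec u| ≤ ε * (n * ∑ i, u i ^ 2) := by
  have h1 : |u ⬝ᵥ B.mulVec u| ≤ ∑ i, ∑ j, |u i| * (ε * |u j|) := by
    simp only [dotProduct, mulVec, Finset.mul_sum]
    refine (Finset.abs_sum_le_sum_abs _ _).trans (Finset.sum_le_sum fun i _ => ?_)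
    refine (Finset.abs_sum_le_sum_abs _ _).trans (Finset.sum_le_sum fun j _ => ?_)
    rw [abs_mul, abs_mul]
    gcongr
    exact h i j
  have h2 : ∑ i, ∑ j, |u i| * (ε * |u j|) = ε * (∑ i, |u i|) ^ 2 := by
    rw [sq, Finset.sum_mul_sum, Finset.mul_sum]
    refine Finset.sum_congr rfl fun i _ => ?_
    rw [Finset.mul_sum]
    exact Finset.sum_congr rfl fun j _ => by ring
  have h3 := sq_sum_le_card_mul_sum_sq (s := Finset.univ) (f := fun i => |u i|)
  simp only [sq_abs, Finset.card_univ, Fintype.card_fin] at h3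
  rw [h2] at h1
  exact h1.trans (by gcongr)

theorem deriv_dotProduct_mulVec {n : ℕ} {G : ℝ → Matrix (Fin n) (Fin n) ℝ} {t : ℝ}
    (h : ∀ i j, DifferentiableAt ℝ (fun s => G s i j) t) (u : Fin n → ℝ) :
    deriv (fun s => u ⬝ᵥ (G s).mulVec u) t
      = u ⬝ᵥ (Matrix.of fun i j => deriv (fun s => G s i j) t).mulVec u := by
  simp only [dotProduct, mulVec, of_apply]
  exact (HasDerivAt.fun_sum fun i _ => (HasDerivAt.fun_sum fun j _ =>
    (h i j).hasDerivAt.mul_const (u j)).const_mul (u i)).deriv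

theorem stmt_6 (n : ℕ) (hn : 1 ≤ n) (c ε₁ : ℝ) (hc : 1 < c) (hε : 0 ≤ ε₁)
    (I : Set ℝ) (hIopen : IsOpen I) (hIconn : I.OrdConnected)
    (G : ℝ → Matrix (Fin n) (Fin n) ℝ)
    (hpos : ∀ t ∈ I, (G t).PosDef)
    (hdiff : ∀ i j, ∀ t ∈ I, DifferentiableAt ℝ (fun s => G s i j) t)
    (hbound : ∀ t ∈ I, ∀ i j, |G t i j| < c)
    (hdet : ∀ t ∈ I, 1 / c < (G t).det)
    (hd : ∀ t ∈ I, ∀ i j, |deriv (fun s => G s i j) t| ≤ ε₁) :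
    ∀ t ∈ I, ∀ u : Fin n → ℝ,
      |deriv (fun s => u ⬝ᵥ (G s).mulVec u) t|
        ≤ ε₁ * n ^ 2 * n.factorial * c ^ n * (u ⬝ᵥ (G t).mulVec u) := by
  intro t ht u
  obtain ⟨m, rfl⟩ : ∃ m, n = m + 1 := ⟨n - 1, by omega⟩
  have hc0 : 0 < c := by linarith
  have hq : 0 ≤ u ⬝ᵥ (G t).mulVec u := by
    simpa using (hpos t ht).posSemidef.dotProduct_mulVec_nonneg u
  rw [deriv_dotProduct_mulVec (fun i j => hdiff i j t ht) u]
  refine (abs_dotProduct_mulVec_le hε (fun i j => hd t ht i j) u).trans ?_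
  have hfac : (m.factorial : ℝ) ≤ (m + 1).factorial := by
    exact_mod_cast Nat.factorial_le (Nat.le_succ m)
  have hsum : ∑ i, u i ^ 2
      ≤ (m + 1 : ℕ) * ((m + 1).factorial * c ^ (m + 1) * (u ⬝ᵥ (G t).mulVec u)) := by
    have h := Finset.sum_le_card_nsmul Finset.univ (fun i => u i ^ 2)
      ((m + 1).factorial * c ^ (m + 1) * (u ⬝ᵥ (G t).mulVec u)) fun i _ =>
        (sq_apply_le hc (hpos t ht) (fun i j => (hbound t ht i j).le) (hdet t ht) u i).trans
          (by gcongr)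
    simpa only [Finset.card_univ, Fintype.card_fin, nsmul_eq_mul] using h
  calc ε₁ * ((m + 1 : ℕ) * ∑ i, u i ^ 2)
      ≤ ε₁ * ((m + 1 : ℕ) *
        ((m + 1 : ℕ) * ((m + 1).factorial * c ^ (m + 1) * (u ⬝ᵥ (G t).mulVec u)))) := by gcongr
    _ = _ := by ring
end

section
/- Let n ≥ 1 and b ≥ 0 with 6·n!·b ≤ 1, and let B be a real n×n matrix with |B_{ij}| ≤ b for all i, j. Then det(I + B) > 1/2 and every entry of I + B satisfies |(I + B)_{ij}| < 2, where I is the n×n identity matrix. -/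
open Matrix

/-!
The Leibniz expansion of `det (1 + B)` is dominated by the diagonal term. Since `n ≤ n!`, the
hypothesis gives `n * b ≤ 1/6`, so by Bernoulli the diagonal term is at least
`(1 - b) ^ n ≥ 5/6`. Every other permutation moves some index, hence contributes at least one
off-diagonal factor of size at most `b`, while the remaining factors are at most `1 + b`; as
`(1 + b) ^ n * (1 - b) ^ n ≤ 1`, such a term is at most `(6/5) * b` in absolute value. There are
fewer than `n!` of them, so together they contribute at most `1/5`, and `5/6 - 1/5 > 1/2`.
-/

theorem stmt_8 (n : ℕ) (hn : 1 ≤ n) (b : ℝ) (hb : 0 ≤ b)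
    (hsmall : 6 * n.factorial * b ≤ 1)
    (B : Matrix (Fin n) (Fin n) ℝ) (hB : ∀ i j, |B i j| ≤ b) :
    1 / 2 < (1 + B).det ∧ ∀ i j, |(1 + B) i j| < 2 := by
  have hn1 : (1 : ℝ) ≤ n := by exact_mod_cast hn
  have hfac : (n : ℝ) ≤ n.factorial := by exact_mod_cast Nat.self_le_factorial n
  have hnb : n * b ≤ 1 / 6 := by nlinarith
  have hb6 : b ≤ 1 / 6 := by nlinarith
  have hentry : ∀ i j, |(1 + B) i j| ≤ 1 + b := by
    intro i j
    rw [Matrix.add_apply]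
    refine (abs_add_le _ _).trans (add_le_add ?_ (hB i j))
    rw [Matrix.one_apply]
    split_ifs <;> simp
  refine ⟨?_, fun i j => (hentry i j).trans_lt (by linarith)⟩
  have hlow : (5 / 6 : ℝ) ≤ (1 - b) ^ n := by
    have h := one_add_mul_le_pow (a := -b) (by linarith) n
    rw [← sub_eq_add_neg] at h
    linarith
  have hup : (1 + b) ^ n ≤ 6 / 5 := by
    have h : (1 + b) ^ n * (1 - b) ^ n ≤ 1 := by
      rw [← mul_pow]
      exact pow_le_one₀ (by nlinarith) (by nlinarith)
    have h0 : 0 ≤ (1 + b) ^ n := by positivity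
    nlinarith
  have hdiag : (5 / 6 : ℝ) ≤ ∏ i, (1 + B) i i := by
    calc (5 / 6 : ℝ) ≤ ∏ _i : Fin n, (1 - b) := by simpa using hlow
      _ ≤ ∏ i, (1 + B) i i := by
        refine Finset.prod_le_prod (fun _ _ => by linarith) fun i _ => ?_
        rw [Matrix.add_apply, Matrix.one_apply_eq]
        linarith [(abs_le.mp (hB i i)).1]
  have hoff : ∀ σ : Equiv.Perm (Fin n), σ ≠ 1 →
      |((Equiv.Perm.sign σ : ℤ) : ℝ) * ∏ i, (1 + B) (σ i) i| ≤ b * (6 / 5) := by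
    intro σ hσ
    obtain ⟨k, hk⟩ : ∃ k, σ k ≠ k := by
      by_contra! h
      exact hσ (Equiv.ext h)
    have hs : |((Equiv.Perm.sign σ : ℤ) : ℝ)| = 1 := by
      rcases Int.units_eq_one_or (Equiv.Perm.sign σ) with h | h <;> simp [h]
    rw [abs_mul, hs, one_mul, Finset.abs_prod, ← Finset.mul_prod_erase _ _ (Finset.mem_univ k)]
    refine mul_le_mul ?_ ?_ (Finset.prod_nonneg fun _ _ => abs_nonneg _) hb
    · rw [Matrix.add_apply, Matrix.one_apply_ne hk, zero_add]
      exact hB _ _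
    · calc ∏ i ∈ Finset.univ.erase k, |(1 + B) (σ i) i|
          ≤ ∏ _i ∈ Finset.univ.erase k, (1 + b) :=
            Finset.prod_le_prod (fun _ _ => abs_nonneg _) fun _ _ => hentry _ _
        _ = (1 + b) ^ (n - 1) := by simp
        _ ≤ (1 + b) ^ n := pow_le_pow_right₀ (by linarith) (Nat.sub_le n 1)
        _ ≤ 6 / 5 := hup
  rw [Matrix.det_apply', ← Finset.add_sum_erase _ _ (Finset.mem_univ (1 : Equiv.Perm (Fin n)))]
  have hsum : |∑ σ ∈ Finset.univ.erase (1 : Equiv.Perm (Fin n)),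
      ((Equiv.Perm.sign σ : ℤ) : ℝ) * ∏ i, (1 + B) (σ i) i| ≤ 1 / 5 := by
    calc _ ≤ ∑ σ ∈ Finset.univ.erase (1 : Equiv.Perm (Fin n)),
          |((Equiv.Perm.sign σ : ℤ) : ℝ) * ∏ i, (1 + B) (σ i) i| :=
          Finset.abs_sum_le_sum_abs _ _
      _ ≤ ∑ _σ ∈ Finset.univ.erase (1 : Equiv.Perm (Fin n)), b * (6 / 5) :=
          Finset.sum_le_sum fun σ hσ => hoff σ (Finset.ne_of_mem_erase hσ)
      _ ≤ ∑ _σ : Equiv.Perm (Fin n), b * (6 / 5) :=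
          Finset.sum_le_sum_of_subset_of_nonneg (Finset.erase_subset _ _)
            fun _ _ _ => by positivity
      _ = n.factorial * (b * (6 / 5)) := by
          simp [Fintype.card_perm]
      _ ≤ 1 / 5 := by linarith
  have hs := (abs_le.mp hsum).1
  simp only [Equiv.Perm.sign_one, Units.val_one, Int.cast_one, one_mul, Equiv.Perm.one_apply]
  linarith
end

section
/- Let ε ≥ 0 and T ≥ 1, and define k(t) = sinh(t)²/e^{2t}. Let f : ℝ → ℝ be differentiable with f(t) > 0 and |f'(t)| ≤ ε·f(t) for all t ≥ T. Then for every t ≥ T: |(k·f)'(t)| ≤ 6·(e^{−2T} + ε)·k(t)·f(t). -/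
/-!
With `x = exp (-2 t)`, the weight is `k = (1 - x) ^ 2 / 4`, so `k' = x (1 - x)` and
`k' / k = 4 x / (1 - x)`. This is at most `6 x` as soon as `x ≤ 1 / 3`, which holds for `t ≥ 1`.
The product rule then gives `|(k f)'| ≤ k' f + k |f'| ≤ (6 x + ε) k f`, and `x ≤ exp (-2 T)`.
-/

lemma sinh_sq_div_exp (s : ℝ) :
    Real.sinh s ^ 2 / Real.exp (2 * s) = (1 - Real.exp (-2 * s)) ^ 2 / 4 := by
  have h1 : Real.exp (2 * s) = Real.exp s ^ 2 := by rw [← Real.exp_nat_mul]; norm_num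
  have h2 : Real.exp (-2 * s) = (Real.exp s ^ 2)⁻¹ := by
    rw [← h1, ← Real.exp_neg]; ring_nf
  have h3 := Real.exp_ne_zero s
  rw [h1, h2, Real.sinh_eq, Real.exp_neg]
  field_simp
  ring

theorem stmt_11 (ε T : ℝ) (hε : 0 ≤ ε) (hT : 1 ≤ T)
    (f : ℝ → ℝ) (hf : Differentiable ℝ f)
    (hfpos : ∀ t, T ≤ t → 0 < f t)
    (hslow : ∀ t, T ≤ t → |deriv f t| ≤ ε * f t) :
    ∀ t, T ≤ t →
      |deriv (fun s => (Real.sinh s ^ 2 / Real.exp (2 * s)) * f s) t|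
        ≤ 6 * (Real.exp (-2 * T) + ε) * ((Real.sinh t ^ 2 / Real.exp (2 * t)) * f t) := by
  intro t ht
  simp only [sinh_sq_div_exp]
  have hpos := hfpos t ht
  have hexp : HasDerivAt (fun s : ℝ => Real.exp (-2 * s)) (Real.exp (-2 * t) * (-2)) t := by
    simpa using ((hasDerivAt_id t).const_mul (-2)).exp
  have hk : HasDerivAt (fun s : ℝ => (1 - Real.exp (-2 * s)) ^ 2 / 4)
      (Real.exp (-2 * t) * (1 - Real.exp (-2 * t))) t := by
    refine (((hexp.const_sub 1).pow 2).div_const 4).congr_deriv ?_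
    norm_num
    ring
  rw [(hk.fun_mul (hf t).hasDerivAt).deriv]
  have hxT : Real.exp (-2 * t) ≤ Real.exp (-2 * T) := Real.exp_le_exp.2 (by linarith)
  have hx0 := Real.exp_pos (-2 * t)
  -- `exp (-2 t) ≤ 1 / 3` follows from `exp (2 t) ≥ 2 t + 1 ≥ 3`.
  have hx3 : Real.exp (-2 * t) ≤ 1 / 3 := by
    have h := Real.add_one_le_exp (2 * t)
    have h' : Real.exp (-2 * t) * Real.exp (2 * t) = 1 := by
      rw [← Real.exp_add]; simp
    nlinarith
  have hs := hslow t ht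
  set x := Real.exp (-2 * t)
  have hk' : x * (1 - x) ≤ 6 * Real.exp (-2 * T) * ((1 - x) ^ 2 / 4) := by
    have h1 : x * (1 - x) ≤ 6 * x * ((1 - x) ^ 2 / 4) := by
      nlinarith [mul_nonneg (mul_nonneg hx0.le (by linarith : 0 ≤ 1 - x))
        (by linarith : 0 ≤ 1 / 3 - x)]
    exact h1.trans (by gcongr)
  have hk0 : 0 ≤ x * (1 - x) := mul_nonneg hx0.le (by linarith)
  have hεf : 0 ≤ (1 - x) ^ 2 / 4 * (ε * f t) := by positivity
  calc |x * (1 - x) * f t + (1 - x) ^ 2 / 4 * deriv f t|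
      ≤ x * (1 - x) * f t + (1 - x) ^ 2 / 4 * |deriv f t| := by
        refine (abs_add_le _ _).trans_eq ?_
        rw [abs_mul (x * (1 - x)), abs_mul (_ / 4), abs_of_nonneg hk0, abs_of_pos hpos,
          abs_of_nonneg (by positivity : 0 ≤ (1 - x) ^ 2 / 4)]
    _ ≤ 6 * Real.exp (-2 * T) * ((1 - x) ^ 2 / 4) * f t + (1 - x) ^ 2 / 4 * (ε * f t) := by
        gcongr
    _ ≤ 6 * (Real.exp (-2 * T) + ε) * ((1 - x) ^ 2 / 4 * f t) := by linarith
end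

section
/- Let ε ≥ 0 and T ≥ 1, and define k(t) = sinh(t)²/e^{2t}. Let f : ℝ → ℝ be twice differentiable with f(t) > 0, |f'(t)| ≤ ε·f(t), and |f''(t)| ≤ ε·f(t) for all t ≥ T. Then for every t ≥ T: |(k·f)''(t)| ≤ 30·(e^{−2T} + ε)·k(t)·f(t). -/
lemma hasDerivAt_exp_neg_two_mul (s : ℝ) :
    HasDerivAt (fun s : ℝ => Real.exp (-2 * s)) (-2 * Real.exp (-2 * s)) s := by
  have h := ((hasDerivAt_id s).const_mul (-2)).exp
  refine h.congr_deriv ?_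
  simp only [id]
  ring

lemma deriv_deriv_factor_mul (f : ℝ → ℝ) (hf : Differentiable ℝ f)
    (hf' : Differentiable ℝ (deriv f)) (t : ℝ) :
    deriv (deriv (fun s => (Real.sinh s ^ 2 / Real.exp (2 * s)) * f s)) t =
      -2 * Real.exp (-2 * t) * (1 - 2 * Real.exp (-2 * t)) * f t
        + 2 * (Real.exp (-2 * t) * (1 - Real.exp (-2 * t))) * deriv f t
        + (1 - Real.exp (-2 * t)) ^ 2 / 4 * deriv (deriv f) t := by
  have hk (s : ℝ) : HasDerivAt (fun s : ℝ => (1 - Real.exp (-2 * s)) ^ 2 / 4)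
      (Real.exp (-2 * s) * (1 - Real.exp (-2 * s))) s := by
    refine ((((hasDerivAt_exp_neg_two_mul s).const_sub 1).fun_pow 2).div_const 4).congr_deriv ?_
    norm_num
    ring
  have hk' (s : ℝ) : HasDerivAt (fun s : ℝ => Real.exp (-2 * s) * (1 - Real.exp (-2 * s)))
      (-2 * Real.exp (-2 * s) * (1 - 2 * Real.exp (-2 * s))) s := by
    refine ((hasDerivAt_exp_neg_two_mul s).fun_mul
      ((hasDerivAt_exp_neg_two_mul s).const_sub 1)).congr_deriv ?_
    ring
  have h1 : deriv (fun s => (Real.sinh s ^ 2 / Real.exp (2 * s)) * f s) = fun s =>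
      Real.exp (-2 * s) * (1 - Real.exp (-2 * s)) * f s
        + (1 - Real.exp (-2 * s)) ^ 2 / 4 * deriv f s := by
    funext s
    simp only [sinh_sq_div_exp]
    exact ((hk s).fun_mul (hf s).hasDerivAt).deriv
  rw [h1]
  refine ((((hk' t).fun_mul (hf t).hasDerivAt).fun_add
    ((hk t).fun_mul (hf' t).hasDerivAt)).congr_deriv ?_).deriv
  ring

theorem stmt_12 (ε T : ℝ) (hε : 0 ≤ ε) (hT : 1 ≤ T)
    (f : ℝ → ℝ) (hf : Differentiable ℝ f) (hf' : Differentiable ℝ (deriv f))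
    (hfpos : ∀ t, T ≤ t → 0 < f t)
    (hslow1 : ∀ t, T ≤ t → |deriv f t| ≤ ε * f t)
    (hslow2 : ∀ t, T ≤ t → |deriv (deriv f) t| ≤ ε * f t) :
    ∀ t, T ≤ t →
      |deriv (deriv (fun s => (Real.sinh s ^ 2 / Real.exp (2 * s)) * f s)) t|
        ≤ 30 * (Real.exp (-2 * T) + ε) * ((Real.sinh t ^ 2 / Real.exp (2 * t)) * f t) := by
  intro t ht
  rw [deriv_deriv_factor_mul f hf hf', sinh_sq_div_exp]
  have hF := hfpos t ht
  have h1 := hslow1 t ht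
  have h2 := hslow2 t ht
  have hx0 : 0 < Real.exp (-2 * t) := Real.exp_pos _
  have hxT : Real.exp (-2 * t) ≤ Real.exp (-2 * T) := Real.exp_le_exp.mpr (by linarith)
  have hx4 : Real.exp (-2 * t) ≤ 1 / 4 := by
    -- `exp (-2 t) ≤ exp (-1)²` and `exp 1 ≥ 2`
    have he : Real.exp (-1) ≤ 1 / 2 := by
      rw [Real.exp_neg, inv_le_comm₀ (Real.exp_pos 1) (by norm_num)]
      linarith [Real.add_one_le_exp (1 : ℝ)]
    calc Real.exp (-2 * t) ≤ Real.exp (-1 + -1) := Real.exp_le_exp.mpr (by linarith)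
      _ = Real.exp (-1) * Real.exp (-1) := Real.exp_add _ _
      _ ≤ 1 / 2 * (1 / 2) := by gcongr
      _ = 1 / 4 := by norm_num
  generalize Real.exp (-2 * t) = x at *
  generalize Real.exp (-2 * T) = X at *
  have hk : 9 / 64 ≤ (1 - x) ^ 2 / 4 := by nlinarith
  generalize hkdef : (1 - x) ^ 2 / 4 = k at *
  have ha : |-2 * x * (1 - 2 * x) * f t| ≤ 30 * X * k * f t := by
    rw [abs_mul, abs_of_pos hF]
    gcongr
    rw [abs_le]
    constructor <;> nlinarith [mul_le_mul hxT hk (by norm_num) (by linarith)]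
  have hb : |2 * (x * (1 - x)) * deriv f t| ≤ 29 * k * (ε * f t) := by
    rw [abs_mul]
    gcongr
    rw [abs_le]
    constructor <;> nlinarith
  have hc : |k * deriv (deriv f) t| ≤ k * (ε * f t) := by
    rw [abs_mul, abs_of_nonneg (by linarith : 0 ≤ k)]
    gcongr
  calc _ ≤ _ := abs_add_three _ _ _
    _ ≤ 30 * X * k * f t + 29 * k * (ε * f t) + k * (ε * f t) := by gcongr
    _ = _ := by ring
end
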